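/- arXiv:2402.03265 — 2 statements merged into one kernel-verified Lean document; each statement's English description precedes it below -/
import Mathlib

section
/- Conservation law for F(t) = 3 from a multiplier β(t,x): Let B, E, Q : ℝ → ℝ be smooth and take F(t) ≡ 3. Let β : ℝ × ℝ → ℝ be smooth and satisfy, for all (t,x), β_{xxx} = −E(t) β_x and β_t = β Q(t) − B(t) β_{xxx} − β_{xxxxx}. Define the conserved density C¹(t,x) := β u and the flux C²(t,x) := β u_{xxxx} − β_x u_{xxx} + β_{xx} u_{xx} − β_{xxx} u_x + β_{xxxx} u + B(t)( β u_{xx} − β_x u_x + β_{xx} u ) + β( u u_{xx} + u_x² ) + (E(t)/2) β u² − β_x u u_x + (1/2) β_{xx} u². Then for every smooth u : ℝ × ℝ → ℝ the pointwise identity ∂_t C¹ + ∂_x C² = β · 𝔈[u] holds; in particular, if u satisfies 𝔈[u] = 0 everywhere (with F(t) = 3), then ∂_t C¹ + ∂_x C² = 0 everywhere. -/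
open Real MeasureTheory

/-- Partial derivative with respect to the first (time) variable. -/
noncomputable def pt (f : ℝ → ℝ → ℝ) (t x : ℝ) : ℝ := deriv (fun s => f s x) t

/-- Partial derivative with respect to the second (space) variable. -/
noncomputable def px (f : ℝ → ℝ → ℝ) (t x : ℝ) : ℝ := deriv (fun y => f t y) x

/-- The fifth-order KdV expression
`𝔈[u] = u_t + u_xxxxx + B u_xxx + u u_xxx + E u u_x + F u_x u_xx + Q u`. -/
noncomputable def KdV (B E F Q : ℝ → ℝ) (u : ℝ → ℝ → ℝ) (t x : ℝ) : ℝ :=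
  pt u t x + px (px (px (px (px u)))) t x + B t * px (px (px u)) t x
    + u t x * px (px (px u)) t x + E t * (u t x * px u t x)
    + F t * (px u t x * px (px u) t x) + Q t * u t x

/-!
Since `u u_xxx + 3 u_x u_xx = ½ (u²)_xxx`, at `F = 3` the operator is linear in `u` and `u²`:
`𝔈[u] = u_t + u_xxxxx + B u_xxx + ½ (u²)_xxx + ½ E (u²)_x + Q u`. Lagrange's identity moves the
`x`-derivatives, all of odd order, onto `β` at the cost of the `x`-derivative of the flux, a
combination of bilinear concomitants. What remains is `β_t - Q β + B β_xxx + β_xxxxx` multiplying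
`u` and `½ (β_xxx + E β_x)` multiplying `u²`, and both vanish for the given `β`.
-/

section Calculus

variable {𝕜 : Type*} [NontriviallyNormedField 𝕜]

section Lagrange

variable {𝔸 : Type*} [NormedRing 𝔸] [NormedAlgebra 𝕜 𝔸]

/-- The bilinear concomitant `f g⁽ⁿ⁻¹⁾ - f' g⁽ⁿ⁻²⁾ + ⋯ ± f⁽ⁿ⁻¹⁾ g` of the operator `dⁿ/dxⁿ`: the
boundary term of an `n`-fold integration by parts. The recursion performs one such step. -/
noncomputable def bilinearConcomitant : ℕ → (𝕜 → 𝔸) → (𝕜 → 𝔸) → 𝕜 → 𝔸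
  | 0, _, _ => 0
  | n + 1, f, g => f * iteratedDeriv n g - bilinearConcomitant n (deriv f) g

theorem hasDerivAt_bilinearConcomitant {n : ℕ} {f g : 𝕜 → 𝔸} (hf : ContDiff 𝕜 n f)
    (hg : ContDiff 𝕜 n g) (x : 𝕜) :
    HasDerivAt (bilinearConcomitant n f g)
      (f x * iteratedDeriv n g x - (-1) ^ n * iteratedDeriv n f x * g x) x := by
  induction n generalizing f with
  | zero => simp [bilinearConcomitant, hasDerivAt_zero]
  | succ n ih =>
    have hf_succ : ContDiff 𝕜 (n + 1) f := mod_cast hf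
    obtain ⟨f_diff, -, deriv_contDiff⟩ := contDiff_succ_iff_deriv.mp hf_succ
    have head_deriv : HasDerivAt (f * iteratedDeriv n g)
        (deriv f x * iteratedDeriv n g x + f x * iteratedDeriv (n + 1) g x) x := by
      rw [iteratedDeriv_succ]
      exact (f_diff x).hasDerivAt.mul (hg.differentiable_iteratedDeriv' n x).hasDerivAt
    have tail_deriv := ih deriv_contDiff (hg.of_le (mod_cast n.le_succ))
    refine (head_deriv.sub tail_deriv).congr_deriv ?_
    rw [← iteratedDeriv_succ', pow_succ]
    noncomm_ring

end Lagrange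

section Squares

variable {𝔸 : Type*} [NormedCommRing 𝔸] [NormedAlgebra 𝕜 𝔸] {f : 𝕜 → 𝔸} {x : 𝕜}

theorem deriv_sq (hf : DifferentiableAt 𝕜 f x) : deriv (f ^ 2) x = 2 * (f x * deriv f x) := by
  simp [deriv_pow hf, mul_assoc]

theorem iteratedDeriv_two_sq (hf : ContDiffAt 𝕜 2 f x) :
    iteratedDeriv 2 (f ^ 2) x = 2 * (f x * iteratedDeriv 2 f x + deriv f x ^ 2) := by
  rw [pow_two f, iteratedDeriv_mul hf hf]
  simp only [Finset.sum_range_succ, Finset.sum_range_zero, Nat.choose, iteratedDeriv_zero,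
    iteratedDeriv_one, Nat.reduceAdd, Nat.reduceSub, Nat.cast_one, Nat.cast_ofNat]
  ring

theorem iteratedDeriv_three_sq (hf : ContDiffAt 𝕜 3 f x) :
    iteratedDeriv 3 (f ^ 2) x =
      2 * (f x * iteratedDeriv 3 f x + 3 * (deriv f x * iteratedDeriv 2 f x)) := by
  rw [pow_two f, iteratedDeriv_mul hf hf]
  simp only [Finset.sum_range_succ, Finset.sum_range_zero, Nat.choose, iteratedDeriv_zero,
    iteratedDeriv_one, Nat.reduceAdd, Nat.reduceSub, Nat.cast_one, Nat.cast_ofNat]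
  ring

end Squares

section Slices

variable {E F G : Type*} [NormedAddCommGroup E] [NormedSpace 𝕜 E] [NormedAddCommGroup F]
  [NormedSpace 𝕜 F] [NormedAddCommGroup G] [NormedSpace 𝕜 G] {n : WithTop ℕ∞} {f : E → F → G}

theorem contDiff_slice_left (hf : ContDiff 𝕜 n (Function.uncurry f)) (y : F) :
    ContDiff 𝕜 n fun x => f x y :=
  hf.comp (contDiff_prodMk_left y)

theorem contDiff_slice_right (hf : ContDiff 𝕜 n (Function.uncurry f)) (x : E) :
    ContDiff 𝕜 n (f x) :=
  hf.comp (contDiff_prodMk_right x)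

end Slices

end Calculus

theorem px_eq_deriv (f : ℝ → ℝ → ℝ) (t : ℝ) : px f t = deriv (f t) := rfl

/-- The flux `C²` of the conservation law whose density is `C¹ = β u`. -/
noncomputable def conservedFlux (B E : ℝ → ℝ) (β u : ℝ → ℝ → ℝ) (t x : ℝ) : ℝ :=
  β t x * px (px (px (px u))) t x - px β t x * px (px (px u)) t x
    + px (px β) t x * px (px u) t x - px (px (px β)) t x * px u t x
    + px (px (px (px β))) t x * u t x
    + B t * (β t x * px (px u) t x - px β t x * px u t x
        + px (px β) t x * u t x)
    + β t x * (u t x * px (px u) t x + (px u t x) ^ 2)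
    + (E t / 2) * β t x * (u t x) ^ 2 - px β t x * (u t x * px u t x)
    + (1 / 2) * px (px β) t x * (u t x) ^ 2

section ConservationLaw

variable (B E F Q : ℝ → ℝ) {β u : ℝ → ℝ → ℝ} {t : ℝ}

theorem conservedFlux_eq_bilinearConcomitant (β : ℝ → ℝ → ℝ) (hu : ContDiff ℝ 2 (u t)) :
    conservedFlux B E β u t = fun x =>
      bilinearConcomitant 5 (β t) (u t) x + B t * bilinearConcomitant 3 (β t) (u t) x
        + 1 / 2 * bilinearConcomitant 3 (β t) (u t ^ 2) x
        + E t / 2 * bilinearConcomitant 1 (β t) (u t ^ 2) x := by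
  funext x
  simp only [conservedFlux, px_eq_deriv, bilinearConcomitant, Pi.sub_apply, Pi.mul_apply,
    Pi.zero_apply, iteratedDeriv_two_sq hu.contDiffAt, iteratedDeriv_one,
    deriv_sq (hu.differentiable two_ne_zero x)]
  simp only [iteratedDeriv_succ, iteratedDeriv_zero, Pi.pow_apply]
  ring

theorem px_conservedFlux (hβ : ContDiff ℝ 5 (β t)) (hu : ContDiff ℝ 5 (u t)) (x : ℝ) :
    px (conservedFlux B E β u) t x =
      (β t x * iteratedDeriv 5 (u t) x + iteratedDeriv 5 (β t) x * u t x)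
        + B t * (β t x * iteratedDeriv 3 (u t) x + iteratedDeriv 3 (β t) x * u t x)
        + 1 / 2 * (β t x * iteratedDeriv 3 (u t ^ 2) x + iteratedDeriv 3 (β t) x * u t x ^ 2)
        + E t / 2 * (β t x * deriv (u t ^ 2) x + deriv (β t) x * u t x ^ 2) := by
  have hβ3 : ContDiff ℝ 3 (β t) := hβ.of_le (by norm_num)
  have hβ1 : ContDiff ℝ 1 (β t) := hβ.of_le (by norm_num)
  have hu3 : ContDiff ℝ 3 (u t) := hu.of_le (by norm_num)
  have hu3_sq : ContDiff ℝ 3 (u t ^ 2) := hu3.pow 2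
  have hu1_sq : ContDiff ℝ 1 (u t ^ 2) := hu3_sq.of_le (by norm_num)
  rw [px_eq_deriv, conservedFlux_eq_bilinearConcomitant B E β (hu.of_le (by norm_num))]
  have quintic := hasDerivAt_bilinearConcomitant (n := 5) hβ hu x
  have cubic := hasDerivAt_bilinearConcomitant (n := 3) hβ3 hu3 x
  have cubic_sq := hasDerivAt_bilinearConcomitant (n := 3) hβ3 hu3_sq x
  have linear_sq := hasDerivAt_bilinearConcomitant (n := 1) hβ1 hu1_sq x
  refine ((((quintic.add (cubic.const_mul (B t))).add (cubic_sq.const_mul (1 / 2))).add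
    (linear_sq.const_mul (E t / 2))).congr_deriv ?_).deriv
  simp only [iteratedDeriv_one, Pi.pow_apply]
  ring

theorem conservation_law_F_eq_three_general {x : ℝ}
    (hβt : DifferentiableAt ℝ (fun s => β s x) t) (hβx : ContDiff ℝ 5 (β t))
    (hut : DifferentiableAt ℝ (fun s => u s x) t) (hux : ContDiff ℝ 5 (u t)) :
    pt (fun t x => β t x * u t x) t x + px (conservedFlux B E β u) t x =
      β t x * KdV B E F Q u t x
        + (pt β t x - Q t * β t x + B t * px (px (px β)) t x
            + px (px (px (px (px β)))) t x) * u t x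
        + 1 / 2 * (px (px (px β)) t x + E t * px β t x) * u t x ^ 2
        + (3 - F t) * (β t x * (px u t x * px (px u) t x)) := by
  have density_deriv : pt (fun t x => β t x * u t x) t x = pt β t x * u t x + β t x * pt u t x :=
    deriv_fun_mul hβt hut
  have hux3 : ContDiff ℝ 3 (u t) := hux.of_le (by norm_num)
  rw [density_deriv, px_conservedFlux B E hβx hux, iteratedDeriv_three_sq hux3.contDiffAt,
    deriv_sq (hux.differentiable (by norm_num) x)]
  simp only [KdV, px_eq_deriv, iteratedDeriv_succ, iteratedDeriv_zero]
  ring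

end ConservationLaw

/-- conservation law for `F ≡ 3` from a multiplier `β(t,x)` satisfying
`β_xxx = −E β_x` and `β_t = β Q − B β_xxx − β_xxxxx`.  With density `C¹ = β u` and flux
`C² = β u_xxxx − β_x u_xxx + β_xx u_xx − β_xxx u_x + β_xxxx u
  + B(β u_xx − β_x u_x + β_xx u) + β(u u_xx + u_x²) + (E/2) β u² − β_x u u_x
  + (1/2) β_xx u²`, one has `∂_t C¹ + ∂_x C² = β 𝔈[u]` pointwise; in particular
`∂_t C¹ + ∂_x C² = 0` on solutions with `F = 3`. -/
theorem conservation_law_F_eq_three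
    (B E Q : ℝ → ℝ)
    (hB : ContDiff ℝ (⊤ : ℕ∞) B) (hE : ContDiff ℝ (⊤ : ℕ∞) E)
    (hQ : ContDiff ℝ (⊤ : ℕ∞) Q)
    (β : ℝ → ℝ → ℝ) (hβ : ContDiff ℝ (⊤ : ℕ∞) (Function.uncurry β))
    (hβ3 : ∀ t x, px (px (px β)) t x = -(E t) * px β t x)
    (hβt : ∀ t x, pt β t x
      = β t x * Q t - B t * px (px (px β)) t x - px (px (px (px (px β)))) t x)
    (u : ℝ → ℝ → ℝ) (hu : ContDiff ℝ (⊤ : ℕ∞) (Function.uncurry u)) :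
    (∀ t x,
      pt (fun t x => β t x * u t x) t x
        + px (fun t x =>
            β t x * px (px (px (px u))) t x - px β t x * px (px (px u)) t x
              + px (px β) t x * px (px u) t x - px (px (px β)) t x * px u t x
              + px (px (px (px β))) t x * u t x
              + B t * (β t x * px (px u) t x - px β t x * px u t x
                  + px (px β) t x * u t x)
              + β t x * (u t x * px (px u) t x + (px u t x) ^ 2)
              + (E t / 2) * β t x * (u t x) ^ 2 - px β t x * (u t x * px u t x)
              + (1 / 2) * px (px β) t x * (u t x) ^ 2) t x
      = β t x * KdV B E (fun _ => 3) Q u t x)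
    ∧ ((∀ t x, KdV B E (fun _ => 3) Q u t x = 0) →
      ∀ t x,
        pt (fun t x => β t x * u t x) t x
          + px (fun t x =>
              β t x * px (px (px (px u))) t x - px β t x * px (px (px u)) t x
                + px (px β) t x * px (px u) t x - px (px (px β)) t x * px u t x
                + px (px (px (px β))) t x * u t x
                + B t * (β t x * px (px u) t x - px β t x * px u t x
                    + px (px β) t x * u t x)
                + β t x * (u t x * px (px u) t x + (px u t x) ^ 2)
                + (E t / 2) * β t x * (u t x) ^ 2 - px β t x * (u t x * px u t x)
                + (1 / 2) * px (px β) t x * (u t x) ^ 2) t x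
          = 0) := by
  suffices identity : ∀ t x, pt (fun t x => β t x * u t x) t x + px (conservedFlux B E β u) t x
      = β t x * KdV B E (fun _ => 3) Q u t x from
    ⟨identity, fun hsol t x => (identity t x).trans (by rw [hsol t x, mul_zero])⟩
  intro t x
  have balance := conservation_law_F_eq_three_general B E (fun _ => 3) Q
    ((contDiff_slice_left hβ x).differentiable (by simp) t)
    (contDiff_infty.mp (contDiff_slice_right hβ t) 5)
    ((contDiff_slice_left hu x).differentiable (by simp) t)
    (contDiff_infty.mp (contDiff_slice_right hu t) 5)
  linear_combination balance + u t x * hβt t x + 1 / 2 * u t x ^ 2 * hβ3 t x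
end

section
/- Conserved integral quantity from the multiplier e^{∫Q}: Let B, E, F, Q : ℝ → ℝ be smooth and let H : ℝ → ℝ satisfy H' = Q. Suppose u : ℝ × ℝ → ℝ is smooth, satisfies 𝔈[u] = 0 everywhere, and there exists L > 0 such that u(t,x) = 0 whenever |x| ≥ L. Then the function t ↦ ∫_ℝ e^{H(t)} u(t,x) dx is constant. -/
open Real MeasureTheory

/-!
The equation is a balance law `u_t + ∂ₓ Φ + Q u = 0`: `u u_xxx + F u_x u_xx` is the `x`-derivative
of `u u_xx + (F - 1) / 2 * u_x²` because `u_x u_xx` is a total derivative. The flux `Φ` has compact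
support in `x`, so the mass `M t = ∫ u(t, x) dx` satisfies `M' = -Q M`, and `e^H` is an integrating
factor of this ordinary differential equation.
-/

open Function
open scoped Topology

section ParametricIntegral

variable {X G : Type*} [TopologicalSpace X] [T2Space X] [MeasurableSpace X] [OpensMeasurableSpace X]
  {μ : Measure X} [IsFiniteMeasureOnCompacts μ] [NormedAddCommGroup G] [NormedSpace ℝ G]

theorem hasDerivAt_integral_of_eventually_eq_zero_off_compact {f f' : ℝ → X → G} {t : ℝ} {K : Set X}
    (hf : ∀ s, Continuous (f s)) (hf' : Continuous (uncurry f'))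
    (hff' : ∀ s x, HasDerivAt (fun r ↦ f r x) (f' s x) s)
    (hK : IsCompact K) (hfK : ∀ᶠ s in 𝓝 t, ∀ x ∉ K, f s x = 0) :
    HasDerivAt (fun s ↦ ∫ x, f s x ∂μ) (∫ x, f' t x ∂μ) t := by
  have hf'K : ∀ᶠ s in 𝓝 t, ∀ x ∉ K, f' s x = 0 := hfK.eventually_nhds.mono fun s hs x hx ↦
    (hff' s x).unique <|
      (hasDerivAt_const s (0 : G)).congr_of_eventuallyEq (hs.mono fun r hr ↦ hr x hx)
  have integrable_of_eq_zero {g : X → G} (hg : Continuous g) (hgK : ∀ x ∉ K, g x = 0) :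
      Integrable g μ :=
    hg.integrable_of_hasCompactSupport (HasCompactSupport.intro hK hgK)
  obtain ⟨N, ⟨hN_nhds, hN_compact⟩, hN⟩ := (compact_basis_nhds t).mem_iff.1 hf'K
  obtain ⟨C, hC⟩ := (hN_compact.prod hK).exists_bound_of_continuousOn hf'.continuousOn
  have hbound (x : X) (s : ℝ) (hs : s ∈ N) : ‖f' s x‖ ≤ K.indicator (fun _ ↦ C) x := by
    by_cases hx : x ∈ K
    · simpa only [Set.indicator_of_mem hx, uncurry_apply_pair] using hC (s, x) ⟨hs, hx⟩
    · simp only [Set.indicator_of_notMem hx, hN hs x hx, norm_zero, le_refl]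
  have hbound_int : Integrable (K.indicator fun _ ↦ C) μ :=
    (integrable_indicator_iff hK.isClosed.measurableSet).2
      (integrableOn_const hK.measure_lt_top.ne)
  exact (hasDerivAt_integral_of_dominated_loc_of_deriv_le hN_nhds
    (hfK.mono fun s hs ↦ (integrable_of_eq_zero (hf s) hs).aestronglyMeasurable)
    (integrable_of_eq_zero (hf t) hfK.self_of_nhds)
    (integrable_of_eq_zero (hf'.uncurry_left t) hf'K.self_of_nhds).aestronglyMeasurable
    (.of_forall hbound) hbound_int (.of_forall fun x s _ ↦ hff' s x)).2

end ParametricIntegral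

section RealLine

variable {G : Type*} [NormedAddCommGroup G] [NormedSpace ℝ G] {g : ℝ → G}

theorem integrable_deriv_of_hasCompactSupport (hg : ContDiff ℝ 1 g) (hgc : HasCompactSupport g) :
    Integrable (deriv g) :=
  hg.continuous_deriv_one.integrable_of_hasCompactSupport hgc.deriv

theorem integral_deriv_eq_zero_of_hasCompactSupport (hg : ContDiff ℝ 1 g)
    (hgc : HasCompactSupport g) : ∫ x, deriv g x = 0 :=
  integral_eq_zero_of_hasDerivAt_of_integrable
    (fun x ↦ (hg.differentiable one_ne_zero x).hasDerivAt)
    (integrable_deriv_of_hasCompactSupport hg hgc)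
    (hg.continuous.integrable_of_hasCompactSupport hgc)

theorem hasDerivAt_iterate_deriv {n : ℕ} (hg : ContDiff ℝ (n + 1 : ℕ) g) (x : ℝ) :
    HasDerivAt (deriv^[n] g) (deriv^[n + 1] g x) x := by
  rw [add_comm] at hg
  rw [iterate_succ_apply']
  exact ((hg.iterate_deriv' 1 n).differentiable one_ne_zero x).hasDerivAt

end RealLine

section TimeDerivative

variable {u : ℝ → ℝ → ℝ}

theorem hasDerivAt_pt (hu : Differentiable ℝ (uncurry u)) (t x : ℝ) :
    HasDerivAt (fun s ↦ u s x) (pt u t x) t :=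
  (hu.comp (differentiable_id.prodMk (differentiable_const x)) t).hasDerivAt

theorem continuous_uncurry_pt (hu : ContDiff ℝ 1 (uncurry u)) : Continuous (uncurry (pt u)) := by
  have hswap : ContDiff ℝ 1 (uncurry fun (p : ℝ × ℝ) s ↦ u s p.2) :=
    hu.comp (contDiff_snd.prodMk (contDiff_snd.comp contDiff_fst))
  exact (Continuous.fderiv_one hswap continuous_fst).clm_apply continuous_const

theorem hasDerivAt_integral_pt {t : ℝ} {K : Set ℝ} (hu : ContDiff ℝ 1 (uncurry u))
    (hK : IsCompact K) (huK : ∀ᶠ s in 𝓝 t, ∀ x ∉ K, u s x = 0) :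
    HasDerivAt (fun s ↦ ∫ x, u s x) (∫ x, pt u t x) t :=
  hasDerivAt_integral_of_eventually_eq_zero_off_compact (fun s ↦ hu.continuous.uncurry_left s)
    (continuous_uncurry_pt hu) (hasDerivAt_pt (hu.differentiable one_ne_zero)) hK huK

end TimeDerivative

/-- The flux `v_xxxx + b v_xx + v v_xx + (c - 1) / 2 * v_x² + e / 2 * v²` of the fifth-order KdV
equation at a fixed time, as a function of the spatial profile `v`; the coefficients `b`, `e`, `c`
are the values of `B`, `E`, `F` at that time. -/
noncomputable def kdvFlux (b e c : ℝ) (v : ℝ → ℝ) (x : ℝ) : ℝ :=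
  deriv^[4] v x + b * deriv^[2] v x + v x * deriv^[2] v x
    + (c - 1) / 2 * (deriv v x * deriv v x) + e / 2 * (v x * v x)

section Flux

variable {b e c : ℝ} {v : ℝ → ℝ}

theorem contDiff_kdvFlux {n : ℕ} (hv : ContDiff ℝ (n + 4 : ℕ) v) :
    ContDiff ℝ n (kdvFlux b e c v) := by
  have h (k : ℕ) (hk : k ≤ 4) : ContDiff ℝ n (deriv^[k] v) :=
    (hv.of_le (by norm_cast; omega)).iterate_deriv' n k
  have h0 : ContDiff ℝ n v := h 0 (by norm_num)
  have h1 : ContDiff ℝ n (deriv v) := h 1 (by norm_num)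
  have h2 : ContDiff ℝ n (deriv^[2] v) := h 2 (by norm_num)
  exact ((((h 4 le_rfl).add (contDiff_const.mul h2)).add (h0.mul h2)).add
    (contDiff_const.mul (h1.mul h1))).add (contDiff_const.mul (h0.mul h0))

theorem hasCompactSupport_kdvFlux (hv : HasCompactSupport v) :
    HasCompactSupport (kdvFlux b e c v) :=
  have h2 : HasCompactSupport (deriv^[2] v) := hv.deriv.deriv
  have h4 : HasCompactSupport (deriv^[4] v) := h2.deriv.deriv
  (((h4.add h2.mul_left).add h2.mul_left).add hv.deriv.mul_left.mul_left).add hv.mul_left.mul_left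

theorem deriv_kdvFlux (hv : ContDiff ℝ 5 v) (x : ℝ) :
    deriv (kdvFlux b e c v) x = deriv^[5] v x + b * deriv^[3] v x + v x * deriv^[3] v x
      + e * (v x * deriv v x) + c * (deriv v x * deriv^[2] v x) := by
  have hd (n : ℕ) (hn : n ≤ 4) : HasDerivAt (deriv^[n] v) (deriv^[n + 1] v x) x :=
    hasDerivAt_iterate_deriv (hv.of_le (by norm_cast; omega)) x
  have d0 : HasDerivAt v (deriv v x) x := hd 0 (by norm_num)
  have d1 : HasDerivAt (deriv v) (deriv^[2] v x) x := hd 1 (by norm_num)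
  have d2 : HasDerivAt (deriv^[2] v) (deriv^[3] v x) x := hd 2 (by norm_num)
  have d4 : HasDerivAt (deriv^[4] v) (deriv^[5] v x) x := hd 4 le_rfl
  have hflux := (((d4.add (d2.const_mul b)).add (d0.mul d2)).add
    ((d1.mul d1).const_mul ((c - 1) / 2))).add ((d0.mul d0).const_mul (e / 2))
  exact hflux.deriv.trans (by ring)

end Flux

section Equation

variable {B E F Q : ℝ → ℝ} {u : ℝ → ℝ → ℝ} {t : ℝ}

theorem KdV_eq_pt_add_deriv_kdvFlux (hu : ContDiff ℝ 5 (u t)) (x : ℝ) :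
    KdV B E F Q u t x
      = pt u t x + deriv (kdvFlux (B t) (E t) (F t) (u t)) x + Q t * u t x := by
  -- `px u t` is definitionally `deriv (u t)`, so `KdV` already speaks about `deriv^[k] (u t)`.
  change pt u t x + deriv^[5] (u t) x + B t * deriv^[3] (u t) x + u t x * deriv^[3] (u t) x
    + E t * (u t x * deriv (u t) x) + F t * (deriv (u t) x * deriv^[2] (u t) x) + Q t * u t x = _
  rw [deriv_kdvFlux hu]
  ring

theorem integral_pt_of_KdV_eq_zero (hu : ContDiff ℝ 5 (u t)) (huc : HasCompactSupport (u t))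
    (hsol : ∀ x, KdV B E F Q u t x = 0) : ∫ x, pt u t x = -(Q t * ∫ x, u t x) := by
  set Φ := kdvFlux (B t) (E t) (F t) (u t)
  have hΦ : ContDiff ℝ 1 Φ := contDiff_kdvFlux (n := 1) hu
  have hΦc : HasCompactSupport Φ := hasCompactSupport_kdvFlux huc
  have hpt (x : ℝ) : pt u t x = -(deriv Φ x + Q t * u t x) := by
    linear_combination hsol x - KdV_eq_pt_add_deriv_kdvFlux (B := B) (E := E) (F := F) (Q := Q) hu x
  calc ∫ x, pt u t x = -∫ x, (deriv Φ x + Q t * u t x) := by simp only [hpt, integral_neg]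
    _ = -((∫ x, deriv Φ x) + ∫ x, Q t * u t x) := by
      rw [integral_add (integrable_deriv_of_hasCompactSupport hΦ hΦc)
        ((hu.continuous.integrable_of_hasCompactSupport huc).const_mul (Q t))]
    _ = -(Q t * ∫ x, u t x) := by
      rw [integral_deriv_eq_zero_of_hasCompactSupport hΦ hΦc, zero_add, integral_const_mul]

theorem hasDerivAt_integral_of_KdV_eq_zero {K : Set ℝ} (hu : ContDiff ℝ 1 (uncurry u))
    (hut : ContDiff ℝ 5 (u t)) (hK : IsCompact K) (huK : ∀ᶠ s in 𝓝 t, ∀ x ∉ K, u s x = 0)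
    (hsol : ∀ x, KdV B E F Q u t x = 0) :
    HasDerivAt (fun s ↦ ∫ x, u s x) (-(Q t * ∫ x, u t x)) t :=
  integral_pt_of_KdV_eq_zero hut (HasCompactSupport.intro hK huK.self_of_nhds) hsol ▸
    hasDerivAt_integral_pt hu hK huK

end Equation

theorem exp_mul_eq_of_hasDerivAt_neg_mul {H Q M : ℝ → ℝ} (hH : ∀ t, HasDerivAt H (Q t) t)
    (hM : ∀ t, HasDerivAt M (-(Q t * M t)) t) (t₁ t₂ : ℝ) :
    exp (H t₁) * M t₁ = exp (H t₂) * M t₂ := by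
  have hderiv (t : ℝ) : HasDerivAt (fun s ↦ exp (H s) * M s) 0 t :=
    ((hH t).exp.mul (hM t)).congr_deriv (by ring)
  exact is_const_of_deriv_eq_zero (fun t ↦ (hderiv t).differentiableAt)
    (fun t ↦ (hderiv t).deriv) t₁ t₂

theorem conserved_integral_generic_general {B E F Q H : ℝ → ℝ} (hH : ∀ t, HasDerivAt H (Q t) t)
    {u : ℝ → ℝ → ℝ} (hu : ContDiff ℝ 1 (uncurry u)) (hux : ∀ t, ContDiff ℝ 5 (u t))
    (hsol : ∀ t x, KdV B E F Q u t x = 0)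
    (hsupp : ∀ t, ∃ K, IsCompact K ∧ ∀ᶠ s in 𝓝 t, ∀ x ∉ K, u s x = 0) (t₁ t₂ : ℝ) :
    ∫ x, exp (H t₁) * u t₁ x = ∫ x, exp (H t₂) * u t₂ x := by
  have hmass (t : ℝ) : HasDerivAt (fun s ↦ ∫ x, u s x) (-(Q t * ∫ x, u t x)) t := by
    obtain ⟨K, hK, huK⟩ := hsupp t
    exact hasDerivAt_integral_of_KdV_eq_zero hu (hux t) hK huK (hsol t)
  simpa only [integral_const_mul] using exp_mul_eq_of_hasDerivAt_neg_mul hH hmass t₁ t₂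

/-- conserved integral quantity from the multiplier `e^{∫Q}`.
If `H' = Q`, `u` is a smooth solution of `𝔈[u] = 0` vanishing for `|x| ≥ L`, then
`t ↦ ∫_ℝ e^{H(t)} u(t,x) dx` is constant. -/
theorem conserved_integral_generic
    (B E F Q : ℝ → ℝ)
    (hB : ContDiff ℝ (⊤ : ℕ∞) B) (hE : ContDiff ℝ (⊤ : ℕ∞) E)
    (hF : ContDiff ℝ (⊤ : ℕ∞) F) (hQ : ContDiff ℝ (⊤ : ℕ∞) Q)
    (H : ℝ → ℝ) (hH : ∀ t, HasDerivAt H (Q t) t)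
    (u : ℝ → ℝ → ℝ) (hu : ContDiff ℝ (⊤ : ℕ∞) (Function.uncurry u))
    (hsol : ∀ t x, KdV B E F Q u t x = 0)
    (hsupp : ∃ L > (0 : ℝ), ∀ t x : ℝ, L ≤ |x| → u t x = 0) :
    ∀ t₁ t₂ : ℝ,
      (∫ x : ℝ, Real.exp (H t₁) * u t₁ x) = ∫ x : ℝ, Real.exp (H t₂) * u t₂ x := by
  obtain ⟨L, -, huL⟩ := hsupp
  have hux (t : ℝ) : ContDiff ℝ 5 (u t) :=
    contDiff_infty.1 (hu.comp (contDiff_prodMk_right t)) 5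
  have huK (t x : ℝ) (hx : x ∉ Metric.closedBall 0 L) : u t x = 0 :=
    huL t x (le_of_lt (by simpa using hx))
  exact conserved_integral_generic_general hH (contDiff_infty.1 hu 1) hux hsol
    fun _ ↦ ⟨_, isCompact_closedBall 0 L, .of_forall huK⟩
end
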